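/- Let ε > 0, a ∈ ℝ, α = a/ε, and λ > 0. Then (ε/(2π)) · Σ_{n∈ℤ} 1/((nε + a)² + λ) = (1/(2√λ)) · sinh(2π√λ/ε) / (cosh(2π√λ/ε) − cos(2πα)). -/

import Mathlib

open MeasureTheory Real Filter

/-- The constant `k(α)` from (K1): `1/|sin(2πα)|` when `α mod 1 ∈ (0,1/4)∪(3/4,1)`,
and `1` when `α mod 1 ∈ [1/4,3/4]`. -/
noncomputable def kConst (α : ℝ) : ℝ :=
  if 1/4 ≤ Int.fract α ∧ Int.fract α ≤ 3/4 then 1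
  else 1 / |Real.sin (2 * Real.pi * α)|

/-- `F(b,α) = b^{5/3} Σ_{k∈ℤ} (|k+α|³+b)^{-2}`. -/
noncomputable def Fsum (α b : ℝ) : ℝ :=
  b ^ ((5:ℝ)/3) * ∑' k : ℤ, ((|(k : ℝ) + α| ^ 3 + b) ^ 2)⁻¹

/-- `sup_{b ≥ 0} F(b,α)`. -/
noncomputable def supF (α : ℝ) : ℝ := ⨆ b : {x : ℝ // 0 ≤ x}, Fsum α b.1

/-- The constant `K₂(α)`. -/
noncomputable def K2 (α : ℝ) : ℝ :=
  5 / (3 * Real.sqrt 3 * Real.pi) * (supF α) ^ 2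

/-- `K(α) = min(K₁(α), K₂(α))` with `K₁(α) = k(α)²`. -/
noncomputable def Kmin (α : ℝ) : ℝ := min ((kConst α) ^ 2) (K2 α)

lemma aux_mem (x y : ℝ) (hy : y ≠ 0) : (x + y * Complex.I : ℂ) ∈ Complex.integerComplement := by
  rintro ⟨n, hn⟩
  have := congrArg Complex.im hn
  simp at this
  exact hy this.symm

lemma aux_summable (x s : ℝ) (hs : 0 < s) :
    Summable fun n : ℤ => (((n : ℝ) + x) ^ 2 + s ^ 2)⁻¹ := by
  have h := (EisensteinSeries.linear_right_summable (x + s * Complex.I : ℂ) 1 (k := 2) le_rfl).norm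
  refine h.congr fun n => ?_
  have e : ((1 : ℤ) * (x + s * Complex.I) + n : ℂ) = ((n + x : ℝ) : ℂ) + (s : ℝ) * Complex.I := by
    push_cast; ring
  rw [e, norm_inv, norm_zpow]
  congr 1
  rw [zpow_ofNat, ← Complex.normSq_eq_norm_sq, Complex.normSq_add_mul_I]

lemma aux_cot (z : ℂ) (hz : z ∈ Complex.integerComplement) :
    Summable fun n : ℕ+ => (1 / (z - n) + 1 / (z + n)) := by
  have h := summable_cotTerm hz
  have := summable_pnat_iff_summable_succ (f := fun n : ℕ => (1 / (z - n) + 1 / (z + n)))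
  rw [this]
  simpa [cotTerm] using h

lemma aux_sum (x s : ℝ) (hs : 0 < s) :
    ∑' n : ℤ, (((n : ℝ) + x) ^ 2 + s ^ 2)⁻¹ =
      (Real.pi / s) * (Real.sinh (2 * Real.pi * s) /
        (Real.cosh (2 * Real.pi * s) - Real.cos (2 * Real.pi * x))) := by
  have hz := aux_mem x s hs.ne'
  have hw : (x - s * Complex.I : ℂ) ∈ Complex.integerComplement := by
    have := aux_mem x (-s) (neg_ne_zero.mpr hs.ne')
    convert this using 1
    push_cast; ring
  have hS := aux_summable x s hs
  set z : ℂ := x + s * Complex.I with hzd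
  set w : ℂ := x - s * Complex.I with hwd
  have key : ∀ n : ℤ, (2 * Complex.I * s) * (((((n : ℝ) + x) ^ 2 + s ^ 2)⁻¹ : ℝ) : ℂ)
      = 1 / (w + n) - 1 / (z + n) := by
    intro n
    have h1 := Complex.integerComplement_add_ne_zero hz n
    have h2 := Complex.integerComplement_add_ne_zero hw n
    have h3 : (((((n : ℝ) + x) ^ 2 + s ^ 2) : ℝ) : ℂ) = (w + n) * (z + n) := by
      rw [hzd, hwd]; push_cast
      linear_combination (s:ℂ)^2 * Complex.I_sq
    rw [Complex.ofReal_inv, h3]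
    field_simp
    rw [hzd, hwd]; ring
  have h1 := cot_series_rep hz
  have h2 := cot_series_rep hw
  have hSp : Summable fun n : ℕ+ => ((((n : ℤ) : ℝ) + x) ^ 2 + s ^ 2)⁻¹ :=
    hS.comp_injective (i := fun n : ℕ+ => (n : ℤ)) (fun a b h => by simpa using h)
  have hSn : Summable fun n : ℕ+ => ((((-(n : ℤ) : ℤ) : ℝ) + x) ^ 2 + s ^ 2)⁻¹ :=
    hS.comp_injective (i := fun n : ℕ+ => -(n : ℤ)) (fun a b h => by simpa using h)
  have hsplit := tsum_int_eq_zero_add_tsum_pnat hS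
  rw [add_assoc, ← hSp.tsum_add hSn] at hsplit
  have hC : (2 * Complex.I * s) * ((∑' n : ℤ, (((n : ℝ) + x) ^ 2 + s ^ 2)⁻¹ : ℝ) : ℂ)
      = Real.pi * Complex.cot (Real.pi * w) - Real.pi * Complex.cot (Real.pi * z) := by
    rw [hsplit, h1, h2, Complex.ofReal_add, mul_add, key, Complex.ofReal_tsum, ← tsum_mul_left,
      add_sub_add_comm, ← (aux_cot w hw).tsum_sub (aux_cot z hz)]
    congr 1
    · simp
    · refine tsum_congr fun n => ?_
      rw [Complex.ofReal_add, mul_add, key, key]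
      push_cast
      ring
  have sz : Complex.sin (Real.pi * z) ≠ 0 := sin_pi_mul_ne_zero hz
  have sw : Complex.sin (Real.pi * w) ≠ 0 := sin_pi_mul_ne_zero hw
  have hsin : Complex.sin (Real.pi * z) * Complex.cos (Real.pi * w)
      - Complex.cos (Real.pi * z) * Complex.sin (Real.pi * w)
      = (Real.sinh (2 * Real.pi * s) : ℝ) * Complex.I := by
    rw [← Complex.sin_sub, Complex.ofReal_sinh, ← Complex.sin_mul_I]
    congr 1
    rw [hzd, hwd]; push_cast; ring
  have hcos : 2 * (Complex.sin (Real.pi * z) * Complex.sin (Real.pi * w))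
      = ((Real.cosh (2 * Real.pi * s) - Real.cos (2 * Real.pi * x) : ℝ) : ℂ) := by
    have e1 : ((2 * Real.pi * s : ℝ) : ℂ) * Complex.I = Real.pi * z - Real.pi * w := by
      rw [hzd, hwd]; push_cast; ring
    have e2 : ((2 * Real.pi * x : ℝ) : ℂ) = Real.pi * z + Real.pi * w := by
      rw [hzd, hwd]; push_cast; ring
    rw [Complex.ofReal_sub, Complex.ofReal_cosh, Complex.ofReal_cos, ← Complex.cos_mul_I, e1, e2,
      Complex.cos_sub, Complex.cos_add]
    ring
  have hD : ((Real.cosh (2 * Real.pi * s) - Real.cos (2 * Real.pi * x) : ℝ) : ℂ) ≠ 0 := by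
    rw [← hcos]; simp [sz, sw]
  have hs' : (s : ℂ) ≠ 0 := by exact_mod_cast hs.ne'
  have hcot : Real.pi * Complex.cot (Real.pi * w) - Real.pi * Complex.cot (Real.pi * z)
      = 2 * Real.pi * ((Real.sinh (2 * Real.pi * s) : ℝ) * Complex.I) /
        ((Real.cosh (2 * Real.pi * s) - Real.cos (2 * Real.pi * x) : ℝ) : ℂ) := by
    rw [← hcos, ← hsin, Complex.cot, Complex.cot]
    field_simp
  rw [hcot] at hC
  apply Complex.ofReal_injective
  apply mul_left_cancel₀ (show (2 * Complex.I * s : ℂ) ≠ 0 by simp [hs'])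
  rw [hC, Complex.ofReal_mul, Complex.ofReal_div, Complex.ofReal_div]
  field_simp

/-- diagonal of the Green's function of `(i d/dx - a)² + λ` on the circle. -/
theorem green_function_diagonal
    (ε : ℝ) (hε : 0 < ε) (a α : ℝ) (hα : α = a / ε)
    (lam : ℝ) (hlam : 0 < lam) :
    (ε / (2 * Real.pi)) * ∑' n : ℤ, (((n : ℝ) * ε + a) ^ 2 + lam)⁻¹ =
      (1 / (2 * Real.sqrt lam)) *
        (Real.sinh (2 * Real.pi * Real.sqrt lam / ε) /
          (Real.cosh (2 * Real.pi * Real.sqrt lam / ε) - Real.cos (2 * Real.pi * α))) := by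
  have hl : 0 < Real.sqrt lam := Real.sqrt_pos.mpr hlam
  have h := aux_sum α (Real.sqrt lam / ε) (div_pos hl hε)
  have hterm : ∀ n : ℤ, (((n : ℝ) * ε + a) ^ 2 + lam)⁻¹
      = (ε ^ 2)⁻¹ * (((n : ℝ) + α) ^ 2 + (Real.sqrt lam / ε) ^ 2)⁻¹ := by
    intro n
    rw [← mul_inv]
    congr 1
    rw [hα, div_pow, Real.sq_sqrt hlam.le]
    field_simp
  rw [tsum_congr hterm, tsum_mul_left, h, mul_div_assoc]
  have := Real.pi_pos.ne'
  field_simp
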